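/- arXiv:1408.2572 — 4 statements merged into one kernel-verified Lean document; each statement's English description precedes it below -/
import Mathlib

section
/- Fix a natural number n ≥ 2, reals P > 0 and W > 0, a strictly increasing function r : ℝ → ℝ with r(P) > 0 satisfying n · r(P/((n−1)·P + 1)) < r(P), a function π : ℝ → ℝ → ℝ strictly increasing in its first argument, a probability space (Ω, μ), and a random traffic intensity Λ : Ω → ℝ. If both ω ↦ π(W/n, Λ(ω)) and ω ↦ π((W/r(P)) · r(P/((n−1)·P + 1)), Λ(ω)) are integrable with respect to μ, then the expected utility under equal orthogonal sharing strictly exceeds that under full-spectrum sharing: ∫ π(W/n, Λ(ω)) dμ(ω) > ∫ π((W/r(P)) · r(P/((n−1)·P + 1)), Λ(ω)) dμ(ω). -/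
open MeasureTheory

/-- The bandwidth of exclusively held spectrum, used at power spectral density `P`, that is exactly
as useful as `W` hertz used at signal-to-interference-plus-noise ratio `s`, when one hertz at ratio
`s` has usefulness `r s`. The noise floor is normalized to `1`, so exclusive use at density `P` has
ratio `P`; the paper's `w_f(n)` is the case `s = P / ((n - 1) * P + 1)`. -/
noncomputable def effectiveBandwidth (r : ℝ → ℝ) (W P s : ℝ) : ℝ :=
  W / r P * r s

theorem effectiveBandwidth_lt_div_iff {r : ℝ → ℝ} {W P s k : ℝ}
    (hW : 0 < W) (hrP : 0 < r P) (hk : 0 < k) :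
    effectiveBandwidth r W P s < W / k ↔ k * r s < r P := by
  rw [effectiveBandwidth, div_mul_eq_mul_div, div_lt_div_iff₀ hrP hk, mul_assoc,
    mul_lt_mul_iff_right₀ hW, mul_comm]

theorem integral_lt_integral_of_ae_lt {α : Type*} [MeasurableSpace α] {μ : Measure α} [NeZero μ]
    {f g : α → ℝ} (hf : Integrable f μ) (hg : Integrable g μ) (hlt : ∀ᵐ x ∂μ, f x < g x) :
    ∫ x, f x ∂μ < ∫ x, g x ∂μ := by
  have hle : f ≤ᵐ[μ] g := hlt.mono fun _ => le_of_lt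
  refine (integral_mono_ae hf hg hle).lt_of_ne fun heq => ?_
  have hfg : f =ᵐ[μ] g := (integral_eq_iff_of_ae_le hf hg hle).mp heq
  obtain ⟨x, hx_lt, hx_eq⟩ := (hlt.and hfg).exists
  exact hx_lt.ne hx_eq

theorem orthogonal_beats_full_expected_general {Ω T : Type*} [MeasurableSpace Ω] {μ : Measure Ω}
    [NeZero μ] {n : ℕ} (hn : 0 < n) {P W s : ℝ} (hW : 0 < W) {r : ℝ → ℝ} (hrP : 0 < r P)
    (hcond : n * r s < r P) {π : ℝ → T → ℝ} {Λ : Ω → T}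
    (hπ : ∀ᵐ ω ∂μ, StrictMono fun x => π x (Λ ω))
    (hint_o : Integrable (fun ω => π (W / n) (Λ ω)) μ)
    (hint_f : Integrable (fun ω => π (effectiveBandwidth r W P s) (Λ ω)) μ) :
    ∫ ω, π (effectiveBandwidth r W P s) (Λ ω) ∂μ < ∫ ω, π (W / n) (Λ ω) ∂μ := by
  have hbandwidth : effectiveBandwidth r W P s < W / n :=
    (effectiveBandwidth_lt_div_iff hW hrP (Nat.cast_pos.mpr hn)).mpr hcond
  exact integral_lt_integral_of_ae_lt hint_f hint_o (hπ.mono fun _ hmono => hmono hbandwidth)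

/-- Lemma 1: the expected utility under equal orthogonal sharing strictly exceeds
that under full-spectrum sharing. -/
theorem orthogonal_beats_full_expected
    {Ω : Type*} [MeasurableSpace Ω] (μ : Measure Ω) [IsProbabilityMeasure μ]
    (n : ℕ) (hn : 2 ≤ n) (P W : ℝ) (hP : 0 < P) (hW : 0 < W)
    (r : ℝ → ℝ) (hr : StrictMono r) (hrP : 0 < r P)
    (hcond : (n : ℝ) * r (P / (((n : ℝ) - 1) * P + 1)) < r P)
    (π : ℝ → ℝ → ℝ) (hπ : ∀ lam : ℝ, StrictMono (fun x => π x lam))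
    (Λ : Ω → ℝ)
    (hint_o : Integrable (fun ω => π (W / n) (Λ ω)) μ)
    (hint_f : Integrable
      (fun ω => π ((W / r P) * r (P / (((n : ℝ) - 1) * P + 1))) (Λ ω)) μ) :
    ∫ ω, π ((W / r P) * r (P / (((n : ℝ) - 1) * P + 1))) (Λ ω) ∂μ
      < ∫ ω, π (W / n) (Λ ω) ∂μ :=
  orthogonal_beats_full_expected_general (by omega) hW hrP hcond
    (.of_forall fun ω => hπ (Λ ω)) hint_o hint_f
end

section
/- For every real number P with P ≥ 1.62, one has log(1 + P) > 2 · log(1 + P/(P + 1)), i.e., the two-operator instance of the interference-limited condition holds for the Shannon rate function r(γ) = log(1 + γ). -/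
/-! With two operators the condition exponentiates to `(1 + P / (P + 1)) ^ 2 < 1 + P`, and the
difference of the two sides is `P * (P ^ 2 - (P + 1)) / (P + 1) ^ 2`. So the threshold on positive
`P` is the larger root of `x ^ 2 = x + 1`, the golden ratio `φ = 1.618…`. -/

open scoped goldenRatio

theorem goldenRatio_lt_iff_add_one_lt_sq {x : ℝ} (hx : ψ < x) : φ < x ↔ x + 1 < x ^ 2 := by
  have factorization : x ^ 2 - (x + 1) = (x - φ) * (x - ψ) := by
    linear_combination x * Real.goldenRatio_add_goldenConj - Real.goldenRatio_mul_goldenConj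
  rw [← sub_pos (a := x ^ 2), factorization, mul_pos_iff_of_pos_right (sub_pos.2 hx), sub_pos]

theorem goldenRatio_lt_one_point_six_two : φ < 1.62 :=
  (goldenRatio_lt_iff_add_one_lt_sq (Real.goldenConj_neg.trans (by norm_num))).2 (by norm_num)

theorem one_add_sub_sq_one_add_div_add_one {K : Type*} [Field K] {x : K} (hx : x + 1 ≠ 0) :
    1 + x - (1 + x / (x + 1)) ^ 2 = x * (x ^ 2 - (x + 1)) / (x + 1) ^ 2 := by
  field_simp
  ring

theorem sq_one_add_div_add_one_lt_iff {K : Type*} [Field K] [LinearOrder K] [IsStrictOrderedRing K]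
    {x : K} (hx : 0 < x) : (1 + x / (x + 1)) ^ 2 < 1 + x ↔ x + 1 < x ^ 2 := by
  have hx1 : 0 < x + 1 := by positivity
  rw [← sub_pos, one_add_sub_sq_one_add_div_add_one hx1.ne',
    div_pos_iff_of_pos_right (pow_pos hx1 2), mul_pos_iff_of_pos_left hx, sub_pos]

theorem shannon_interference_limited_two_ops_general {P : ℝ} (hP : 0 < P) :
    2 * Real.log (1 + P / (P + 1)) < Real.log (1 + P) ↔ φ < P :=
  calc 2 * Real.log (1 + P / (P + 1)) < Real.log (1 + P)
    _ ↔ (1 + P / (P + 1)) ^ 2 < 1 + P :=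
      (Real.pow_lt_iff_lt_log (by positivity) (by positivity)).symm
    _ ↔ P + 1 < P ^ 2 := sq_one_add_div_add_one_lt_iff hP
    _ ↔ φ < P := (goldenRatio_lt_iff_add_one_lt_sq (Real.goldenConj_neg.trans hP)).symm

/-- The two-operator interference-limited condition holds for the Shannon rate
whenever `P ≥ 1.62`. -/
theorem shannon_interference_limited_two_ops (P : ℝ) (hP : (1.62 : ℝ) ≤ P) :
    Real.log (1 + P) > 2 * Real.log (1 + P / (P + 1)) := by
  have hφ : φ < P := goldenRatio_lt_one_point_six_two.trans_le hP
  exact (shannon_interference_limited_two_ops_general (Real.goldenRatio_pos.trans hφ)).2 hφ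
end

section
/- Let P > 0 be a real number with log(1 + P) > 2. Then for every integer n ≥ 2, log(1 + P) > n · log(1 + P/((n−1)·P + 1)); i.e., the interference-limited condition holds for the Shannon rate function r(γ) = log(1 + γ) at every number of operators n ≥ 2 whenever P > e² − 1. -/
section LinearOrderedField

variable {K : Type*} [Field K] [LinearOrder K] [IsStrictOrderedRing K] {P x : K}

-- The left-hand side is the SINR of one of `x` operators that all transmit at density `P`.
lemma div_sub_one_mul_add_one_lt_inv (hP : 0 < P) (hx : 1 < x) :
    P / ((x - 1) * P + 1) < (x - 1)⁻¹ := by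
  have : 0 < x - 1 := sub_pos.2 hx
  calc P / ((x - 1) * P + 1) < P / ((x - 1) * P) := by
        gcongr
        exact lt_add_one _
    _ = (x - 1)⁻¹ := by field_simp

lemma div_sub_one_le_two (hx : 2 ≤ x) : x / (x - 1) ≤ 2 := by
  rw [div_le_iff₀ (by linarith)]
  linarith

end LinearOrderedField

lemma mul_log_one_add_div_lt_div_sub_one {P x : ℝ} (hP : 0 < P) (hx : 1 < x) :
    x * Real.log (1 + P / ((x - 1) * P + 1)) < x / (x - 1) := by
  have : 0 < x - 1 := sub_pos.2 hx
  have hlog : Real.log (1 + P / ((x - 1) * P + 1)) ≤ P / ((x - 1) * P + 1) := by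
    simpa using Real.log_le_sub_one_of_pos (x := 1 + P / ((x - 1) * P + 1)) (by positivity)
  rw [div_eq_mul_inv x]
  gcongr
  exact hlog.trans_lt (div_sub_one_mul_add_one_lt_inv hP hx)

theorem shannon_interference_limited_all_n_general {P x : ℝ} (hP : 0 < P) (hx : 1 < x)
    (hlog : x / (x - 1) ≤ Real.log (1 + P)) :
    x * Real.log (1 + P / ((x - 1) * P + 1)) < Real.log (1 + P) :=
  (mul_log_one_add_div_lt_div_sub_one hP hx).trans_le hlog

/-- If `log (1 + P) > 2`, the Shannon interference-limited condition holds for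
every number of operators `n ≥ 2`. -/
theorem shannon_interference_limited_all_n (P : ℝ) (hP : 0 < P)
    (hlog : 2 < Real.log (1 + P)) :
    ∀ n : ℕ, 2 ≤ n →
      (n : ℝ) * Real.log (1 + P / (((n : ℝ) - 1) * P + 1)) < Real.log (1 + P) := by
  intro n hn
  exact shannon_interference_limited_all_n_general hP (by exact_mod_cast hn)
    ((div_sub_one_le_two (by exact_mod_cast hn)).trans hlog.le)
end

section
/- Let p, q : ℕ → ℝ be nonnegative summable sequences with Σ_{τ=0}^∞ (p(τ) + q(τ)) = 1 and Σ_{τ=0}^∞ p(τ) > 0, and let A > B ≥ 0 be reals. Define m(τ) = p(τ)·A + q(τ)·B. Then there exists δ₀ ∈ (0, 1) such that for every discount factor δ with δ₀ < δ < 1, the discounted total loss satisfies Σ_{τ=0}^∞ δ^{τ+1} · m(τ) > B. -/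
/-!
By Abel's limit theorem, the discounted loss tends to the undiscounted total
`(∑ p) * A + (∑ q) * B` as `δ` increases to `1`. The weights `∑ p` and `∑ q` add up to `1` and
`∑ p` is positive, so this limit already exceeds `B`.
-/

open Filter Finset Topology

theorem lt_mul_add_mul_of_add_eq_one {R : Type*} [Semiring R] [PartialOrder R]
    [IsStrictOrderedRing R] {P Q A B : R} (hPQ : P + Q = 1) (hP : 0 < P) (hAB : B < A) :
    B < P * A + Q * B :=
  calc
    B = P * B + Q * B := by rw [← add_mul, hPQ, one_mul]
    _ < P * A + Q * B := by gcongr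

theorem tendsto_tsum_pow_succ_mul_nhdsLT_one {m : ℕ → ℝ} {l : ℝ}
    (hm : Tendsto (fun n ↦ ∑ τ ∈ range n, m τ) atTop (𝓝 l)) :
    Tendsto (fun δ : ℝ ↦ ∑' τ, δ ^ (τ + 1) * m τ) (𝓝[<] 1) (𝓝 l) := by
  have factor_discount (δ : ℝ) : δ * ∑' τ, m τ * δ ^ τ = ∑' τ, δ ^ (τ + 1) * m τ := by
    rw [← tsum_mul_left]
    exact tsum_congr fun τ ↦ by ring
  have discount_tendsto : Tendsto (fun δ : ℝ ↦ δ) (𝓝[<] 1) (𝓝 1) := nhdsWithin_le_nhds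
  simpa only [factor_discount, one_mul] using
    discount_tendsto.mul (Real.tendsto_tsum_powerSeries_nhdsWithin_lt hm)

theorem discounted_loss_exceeds_gain_general {p q : ℕ → ℝ} {P Q A B : ℝ}
    (hp : Tendsto (fun n ↦ ∑ τ ∈ range n, p τ) atTop (𝓝 P))
    (hq : Tendsto (fun n ↦ ∑ τ ∈ range n, q τ) atTop (𝓝 Q))
    (hPQ : P + Q = 1) (hP : 0 < P) (hAB : B < A) :
    ∃ δ₀ ∈ Set.Ioo (0 : ℝ) 1, ∀ δ : ℝ, δ₀ < δ → δ < 1 →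
      B < ∑' τ : ℕ, δ ^ (τ + 1) * (p τ * A + q τ * B) := by
  have total_loss : Tendsto (fun n ↦ ∑ τ ∈ range n, (p τ * A + q τ * B)) atTop
      (𝓝 (P * A + Q * B)) := by
    simpa only [sum_add_distrib, sum_mul] using (hp.mul_const A).add (hq.mul_const B)
  have eventually_lt : ∀ᶠ δ : ℝ in 𝓝[<] 1, B < ∑' τ, δ ^ (τ + 1) * (p τ * A + q τ * B) :=
    (tendsto_tsum_pow_succ_mul_nhdsLT_one total_loss).eventually_const_lt
      (lt_mul_add_mul_of_add_eq_one hPQ hP hAB)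
  obtain ⟨δ₀, ⟨half_le, lt_one⟩, lt_loss⟩ :=
    (mem_nhdsLT_iff_exists_mem_Ico_Ioo_subset (one_half_lt_one (α := ℝ))).mp eventually_lt
  exact ⟨δ₀, ⟨one_half_pos.trans_le half_le, lt_one⟩, fun _ h₀ h₁ ↦ lt_loss ⟨h₀, h₁⟩⟩

/-- For `δ` sufficiently close to `1`, the expected discounted loss of an
undetectable deviation exceeds the one-slot gain `B`. -/
theorem discounted_loss_exceeds_gain
    (p q : ℕ → ℝ) (hp0 : ∀ τ, 0 ≤ p τ) (hq0 : ∀ τ, 0 ≤ q τ)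
    (hps : Summable p) (hqs : Summable q)
    (hsum : ∑' τ : ℕ, (p τ + q τ) = 1) (hppos : 0 < ∑' τ : ℕ, p τ)
    (A B : ℝ) (hAB : B < A) (hB : 0 ≤ B) :
    ∃ δ₀ ∈ Set.Ioo (0 : ℝ) 1, ∀ δ : ℝ, δ₀ < δ → δ < 1 →
      B < ∑' τ : ℕ, δ ^ (τ + 1) * (p τ * A + q τ * B) :=
  discounted_loss_exceeds_gain_general hps.hasSum.tendsto_sum_nat hqs.hasSum.tendsto_sum_nat
    (hps.tsum_add hqs ▸ hsum) hppos hAB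
end
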